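/- Every 1-saturated subcubic graph in which every 3-vertex lies on a cycle of length at most 4 admits a (1,2,2,2)-packing coloring. -/

import Mathlib

open SimpleGraph

/-- `c` is an `S`-packing coloring of `G` for the sequence `s`: vertices sharing
color `i` are at distance greater than `s i`. -/
def IsPackingColoring {V : Type*} (G : SimpleGraph V) {m : ℕ} (s : Fin m → ℕ)
    (c : V → Fin m) : Prop :=
  ∀ u v : V, u ≠ v → c u = c v → G.Reachable u v → s (c u) < G.dist u v

/-- `G` is subcubic: every vertex has degree at most 3. -/
def Subcubic {V : Type*} [Fintype V] (G : SimpleGraph V) [DecidableRel G.Adj] : Prop :=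
  ∀ v : V, G.degree v ≤ 3

/-- `G` is `k`-saturated: every 3-vertex is adjacent to at most `k` 3-vertices. -/
def Saturated {V : Type*} [Fintype V] (G : SimpleGraph V) [DecidableRel G.Adj] (k : ℕ) : Prop :=
  ∀ v : V, G.degree v = 3 →
    ((G.neighborFinset v).filter (fun u => G.degree u = 3)).card ≤ k

/-!
Delete a set of vertices of degree at most two so that every 3-vertex loses a neighbor. The kept
vertices then induce a graph of maximum degree two. There, outside any maximal independent set,
every vertex has at most two others within distance two.

Let the first color class `I` be independent and maximal both among the kept vertices and in the
whole graph. The deleted vertices are chosen on the short cycles: all twins but one of each class,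
and suitable vertices of degree two on triangles and 4-cycles. Two kept vertices whose common
neighbor was deleted are adjacent or have a kept common neighbor, so the deletion loses no conflict
between them. If `I` contains the kept twins and, for each triangle with two 3-vertices, one of the
two neighbors hanging off it, then every deleted vertex outside `I` also has at most two conflicts.
Saturation makes the hanging neighbors so sparse that Hall's theorem picks an independent choice of
them. Greedily coloring the kept vertices and then the deleted ones needs three further colors.
-/

theorem encard_le_two_of_subset_pair {α : Type*} {s : Set α} {a b : α} (hs : s ⊆ {a, b}) :
    s.encard ≤ 2 := by
  refine (Set.encard_le_encard hs).trans ((Set.encard_insert_le {b} a).trans_eq ?_)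
  rw [Set.encard_singleton, one_add_one_eq_two]

theorem eq_or_eq_of_mem_of_encard_le_two {α : Type*} {s : Set α} {a b w : α} (hs : s.encard ≤ 2)
    (ha : a ∈ s) (hb : b ∈ s) (hab : a ≠ b) (hw : w ∈ s) : w = a ∨ w = b := by
  have hsub : ({a, b} : Set α) ⊆ s := Set.insert_subset ha (Set.singleton_subset_iff.2 hb)
  have heq : {a, b} = s := (Set.toFinite _).eq_of_subset_of_encard_le hsub
    (hs.trans_eq (Set.encard_pair hab).symm)
  simpa only [← heq, Set.mem_insert_iff, Set.mem_singleton_iff] using hw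

theorem exists_eq_of_eq_or_eq_of_notMem {α : Type*} {s : Set α} {a b : α} (h : a ∈ s ∨ b ∈ s) :
    ∃ t, ∀ u ∉ s, u = a ∨ u = b → u = t := by
  obtain ha | hb := h
  · exact ⟨b, fun u hu hab => hab.resolve_left fun hua => hu (hua ▸ ha)⟩
  · exact ⟨a, fun u hu hab => hab.resolve_right fun hub => hu (hub ▸ hb)⟩

section Coloring

variable {V : Type*} {G H : SimpleGraph V}

theorem exists_isIndepSet_superset_dominating {S B : Set V} (hS : G.IsIndepSet S) (hSB : S ⊆ B) :
    ∃ I, S ⊆ I ∧ I ⊆ B ∧ G.IsIndepSet I ∧ ∀ v ∈ B, v ∉ I → ∃ w ∈ I, G.Adj v w := by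
  obtain ⟨I, hSI, hI⟩ := zorn_subset_nonempty {I | I ⊆ B ∧ G.IsIndepSet I}
    (fun c hc hchain _ => ⟨⋃₀ c, ⟨Set.sUnion_subset fun I hI => (hc hI).1,
      (Set.pairwise_sUnion hchain.directedOn).2 fun I hI => (hc hI).2⟩,
      fun _ => Set.subset_sUnion_of_mem⟩) S ⟨hSB, hS⟩
  refine ⟨I, hSI, hI.prop.1, hI.prop.2, fun v hvB hvI => ?_⟩
  by_contra! hv
  have hinsert : G.IsIndepSet (insert v I) :=
    hI.prop.2.insert fun w hw _ => ⟨hv w hw, mt Adj.symm (hv w hw)⟩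
  exact hvI (hI.le_of_ge ⟨Set.insert_subset hvB hI.prop.1, hinsert⟩ (Set.subset_insert v I)
    (Set.mem_insert v I))

theorem colorable_induce_insert {k : ℕ} {C : Set V} {s : V} (hC : (H.induce C).Colorable k)
    (hs : (H.neighborSet s).encard < k) : (H.induce (insert s C)).Colorable k := by
  classical
  obtain ⟨c⟩ := hC
  let used : Set (Fin k) := c '' ((↑) ⁻¹' H.neighborSet s)
  have hused : used.encard < (Set.univ : Set (Fin k)).encard := calc
    used.encard ≤ ((↑) ⁻¹' H.neighborSet s : Set C).encard := Set.encard_image_le _ _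
    _ ≤ (H.neighborSet s).encard :=
      Set.encard_le_encard_of_injOn (Set.mapsTo_preimage _ _) Subtype.val_injective.injOn
    _ < (Set.univ : Set (Fin k)).encard := by simpa using hs
  obtain ⟨fresh, hfresh⟩ := (Set.ne_univ_iff_exists_notMem used).1 fun h => hused.ne (h ▸ rfl)
  have fresh_ne (u : C) (hu : H.Adj s u) : fresh ≠ c u := fun h => hfresh ⟨u, hu, h.symm⟩
  have mem_of_ne (u : ↥(insert s C)) (hu : (u : V) ≠ s) : (u : V) ∈ C := u.2.resolve_left hu
  refine ⟨Coloring.mk (fun u => if hu : (u : V) = s then fresh else c ⟨u, mem_of_ne u hu⟩) ?_⟩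
  intro u v huv
  have huv : H.Adj u v := huv
  by_cases hu : (u : V) = s <;> by_cases hv : (v : V) = s
  · exact absurd (hu.trans hv.symm) huv.ne
  · simpa only [hu, hv, dite_true, dite_false] using
      fresh_ne ⟨v, mem_of_ne v hv⟩ (by rwa [hu] at huv)
  · simpa only [hu, hv, dite_true, dite_false] using
      (fresh_ne ⟨u, mem_of_ne u hu⟩ (by rwa [hv, H.adj_comm] at huv)).symm
  · simpa only [hu, hv, dite_false] using
      c.valid (show (H.induce C).Adj ⟨u, mem_of_ne u hu⟩ ⟨v, mem_of_ne v hv⟩ from huv)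

theorem colorable_of_colorable_induce [Finite V] {k : ℕ} {B : Set V}
    (hB : (H.induce B).Colorable k) (hdeg : ∀ v ∉ B, (H.neighborSet v).encard < k) :
    H.Colorable k := by
  have hunion (S : Set V) (hS : S ⊆ Bᶜ) : (H.induce (S ∪ B)).Colorable k := by
    induction S, Set.toFinite S using Set.Finite.induction_on with
    | empty => rwa [Set.empty_union]
    | insert _ _ ih =>
      rw [Set.insert_union]
      obtain ⟨hs, hS⟩ := Set.insert_subset_iff.1 hS
      exact colorable_induce_insert (ih hS) (hdeg _ hs)
  have huniv := hunion Bᶜ subset_rfl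
  rw [Set.compl_union_self] at huniv
  exact huniv.of_hom (induceUnivIso H).symm.toHom

theorem colorable_of_encard_neighborSet_lt [Finite V] {k : ℕ}
    (hdeg : ∀ v, (H.neighborSet v).encard < k) : H.Colorable k :=
  colorable_of_colorable_induce (.of_isEmpty (V := (∅ : Set V)) k) fun v _ => hdeg v

/-- The conflict graph of `I` joins distinct vertices outside `I` that are at distance at most two
in `G`. Its proper colorings are what remains to be found once the independent set `I` is the first
class of a `(1, 2, …, 2)`-packing coloring. -/
def conflictGraph (G : SimpleGraph V) (I : Set V) : SimpleGraph V where
  Adj u v := u ≠ v ∧ u ∉ I ∧ v ∉ I ∧ (G.Adj u v ∨ (G.commonNeighbors u v).Nonempty)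
  symm.symm _ _ h := ⟨h.1.symm, h.2.2.1, h.2.1,
    h.2.2.2.imp Adj.symm fun hne => G.commonNeighbors_symm _ _ ▸ hne⟩
  loopless.irrefl _ h := h.1 rfl

theorem eq_or_adj_of_conflictGraph_adj {I : Set V} {a b u v : V} (hN : G.neighborSet v = {a, b})
    (hvu : (conflictGraph G I).Adj v u) : (u = a ∨ G.Adj a u) ∨ u = b ∨ G.Adj b u := by
  obtain ⟨-, -, -, hadj | ⟨n, hvn, hun⟩⟩ := hvu
  · rw [← mem_neighborSet, hN] at hadj
    exact hadj.imp .inl .inl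
  · rw [hN] at hvn
    obtain rfl | rfl := hvn
    exacts [.inl (.inr hun.symm), .inr (.inr hun.symm)]

theorem induce_conflictGraph_le {I B : Set V}
    (hB : ∀ u ∈ B, ∀ v ∈ B, u ≠ v → (G.commonNeighbors u v).Nonempty →
      G.Adj u v ∨ ∃ n ∈ G.commonNeighbors u v, n ∈ B) :
    (conflictGraph G I).induce B ≤ conflictGraph (G.induce B) ((↑) ⁻¹' I) := by
  rintro u v ⟨huv, huI, hvI, hnear⟩
  refine ⟨fun h => huv (congrArg _ h), huI, hvI, ?_⟩
  obtain hadj | ⟨n, hn, hnB⟩ := hnear.elim .inl (hB u u.2 v v.2 huv)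
  exacts [.inl hadj, .inr ⟨⟨n, hnB⟩, hn⟩]

theorem exists_isPackingColoring_of_colorable_conflictGraph {k : ℕ} {I : Set V}
    (hI : G.IsIndepSet I) (hcol : (conflictGraph G I).Colorable k) :
    ∃ c : V → Fin (k + 1), IsPackingColoring G (Fin.cons 1 fun _ => 2) c := by
  classical
  obtain ⟨c⟩ := hcol
  refine ⟨fun v => if v ∈ I then 0 else (c v).succ, fun u v huv hcuv hr => ?_⟩
  have hne_zero : G.dist u v ≠ 0 := fun h => huv (hr.dist_eq_zero_iff.1 h)
  by_cases hu : u ∈ I <;> by_cases hv : v ∈ I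
  · have hne_one : G.dist u v ≠ 1 := fun h => hI hu hv huv (dist_eq_one_iff_adj.1 h)
    simp only [hu, if_true, Fin.cons_zero]
    lia
  · simp [hu, hv, (Fin.succ_ne_zero _).symm] at hcuv
  · simp [hu, hv] at hcuv
  · simp only [hu, hv, if_false, Fin.succ_inj] at hcuv
    have not_conflict : ¬(G.Adj u v ∨ (G.commonNeighbors u v).Nonempty) :=
      fun h => c.valid (show (conflictGraph G I).Adj u v from ⟨huv, hu, hv, h⟩) hcuv
    have hne_one : G.dist u v ≠ 1 := fun h => not_conflict (.inl (dist_eq_one_iff_adj.1 h))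
    have hne_two : G.dist u v ≠ 2 := fun h => by
      obtain ⟨w, hw⟩ := hr.exists_walk_length_eq_dist
      match w, hw.trans h with
      | .cons hux (.cons hxv .nil), _ => exact not_conflict (.inr ⟨_, hux, hxv.symm⟩)
    simp only [hu, if_false, Fin.cons_succ]
    lia

-- Sending a conflict of `v` to the neighbor of `v` through which it arises is injective.
theorem encard_neighborSet_conflictGraph_le_two {I : Set V}
    (hdeg : ∀ v, (G.neighborSet v).encard ≤ 2) (hdom : ∀ v ∉ I, ∃ w ∈ I, G.Adj v w) (v : V) :
    ((conflictGraph G I).neighborSet v).encard ≤ 2 := by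
  have hvia (u : V) (hu : (conflictGraph G I).Adj v u) : ∃ n, G.Adj v n ∧ (u = n ∨ G.Adj n u) := by
    obtain ⟨-, -, -, hadj | ⟨n, hvn, hun⟩⟩ := hu
    · exact ⟨u, hadj, .inl rfl⟩
    · exact ⟨n, hvn, .inr hun.symm⟩
  choose! via adj_via via_spec using hvia
  refine (Set.encard_le_encard_of_injOn (t := G.neighborSet v) adj_via ?_).trans (hdeg v)
  intro u hu u' hu' heq
  have hn := adj_via u hu
  have hspec := via_spec u hu
  have hspec' := via_spec u' hu'
  rw [← heq] at hspec'
  generalize via u = n at hn hspec hspec'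
  obtain ⟨hvu, hvI, huI, -⟩ := hu
  obtain ⟨hvu', -, hu'I, -⟩ := hu'
  by_cases hnI : n ∈ I
  · have hnu : G.Adj n u := hspec.resolve_left fun h => huI (h ▸ hnI)
    have hnu' : G.Adj n u' := hspec'.resolve_left fun h => hu'I (h ▸ hnI)
    exact ((eq_or_eq_of_mem_of_encard_le_two (hdeg n) hn.symm hnu hvu hnu').resolve_left
      hvu'.symm).symm
  · obtain ⟨w, hwI, hnw⟩ := hdom n hnI
    have eq_n (x : V) (hvx : v ≠ x) (hxI : x ∉ I) (hx : x = n ∨ G.Adj n x) : x = n := by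
      refine hx.resolve_right fun hnx => ?_
      have hvw : v ≠ w := fun h => hvI (h ▸ hwI)
      obtain rfl | rfl := eq_or_eq_of_mem_of_encard_le_two (hdeg n) hn.symm hnw hvw hnx
      exacts [hvx rfl, hxI hwI]
    rw [eq_n u hvu huI hspec, eq_n u' hvu' hu'I hspec']

end Coloring

-- Collapsing every edge of `K` to a point identifies at most two vertices, so Hall's condition
-- holds for the images of the sets `A i`, and distinct representatives there are pairwise
-- non-adjacent.
theorem exists_independent_transversal {ι α : Type*} {K : SimpleGraph α}
    (hK : ∀ a, (K.neighborSet a).Subsingleton) (A : ι → Finset α)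
    (hA : Pairwise (Function.onFun Disjoint A)) (hcard : ∀ i, 2 ≤ (A i).card) :
    ∃ f : ι → α, (∀ i, f i ∈ A i) ∧ ∀ i j, ¬K.Adj (f i) (f j) := by
  classical
  let cls (a : α) : Set α := insert a (K.neighborSet a)
  have adj_of_cls_eq {a b : α} (hab : cls a = cls b) (hne : a ≠ b) : K.Adj a b :=
    (hab ▸ Set.mem_insert b _ : b ∈ cls a).resolve_left hne.symm
  have hfiber (s : Finset α) (k : Set α) : (s.filter (cls · = k)).card ≤ 2 := by
    by_contra! hlt
    obtain ⟨a, b, c, ha, hb, hc, hab, hac, hbc⟩ := Finset.two_lt_card_iff.1 hlt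
    simp only [Finset.mem_filter] at ha hb hc
    exact hbc (hK a (adj_of_cls_eq (ha.2.trans hb.2.symm) hab)
      (adj_of_cls_eq (ha.2.trans hc.2.symm) hac))
  have hall (s : Finset ι) : s.card ≤ (s.biUnion fun i => (A i).image cls).card := by
    have hle : 2 * s.card ≤ 2 * (s.biUnion fun i => (A i).image cls).card := calc
      2 * s.card = ∑ _i ∈ s, 2 := by rw [Finset.sum_const, smul_eq_mul, mul_comm]
      _ ≤ ∑ i ∈ s, (A i).card := Finset.sum_le_sum fun i _ => hcard i
      _ = (s.biUnion A).card := (Finset.card_biUnion fun i _ j _ hij => hA hij).symm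
      _ ≤ 2 * ((s.biUnion A).image cls).card :=
        Finset.card_le_mul_card_image _ 2 fun k _ => hfiber _ k
      _ = 2 * (s.biUnion fun i => (A i).image cls).card := by rw [Finset.biUnion_image]
    lia
  obtain ⟨g, hginj, hg⟩ := (Finset.all_card_le_biUnion_card_iff_exists_injective _).1 hall
  choose f hf hfg using fun i => Finset.mem_image.1 (hg i)
  refine ⟨f, hf, fun i j hadj => ?_⟩
  have hcls : cls (f i) = cls (f j) := by
    simp only [cls, (hK (f i)).eq_singleton_of_mem hadj,
      (hK (f j)).eq_singleton_of_mem hadj.symm, Set.pair_comm]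
  exact hadj.ne (congrArg f (hginj (by rw [← hfg i, ← hfg j, hcls])))

section Degree

variable {V : Type*} {G : SimpleGraph V} {v a b c w : V} [Fintype (G.neighborSet v)]

theorem eq_or_eq_of_adj (hv : G.degree v ≤ 2) (ha : G.Adj v a) (hb : G.Adj v b) (hab : a ≠ b)
    (hw : G.Adj v w) : w = a ∨ w = b := by
  by_contra! hne
  have hlt : 2 < (G.neighborFinset v).card := Finset.two_lt_card.2
    ⟨a, by simpa, b, by simpa, w, by simpa, hab, hne.1.symm, hne.2.symm⟩
  rw [card_neighborFinset_eq_degree] at hlt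
  lia

theorem neighborSet_eq_pair (hv : G.degree v ≤ 2) (ha : G.Adj v a) (hb : G.Adj v b)
    (hab : a ≠ b) : G.neighborSet v = {a, b} := by
  ext w
  refine ⟨eq_or_eq_of_adj hv ha hb hab, ?_⟩
  rintro (rfl | rfl)
  exacts [ha, hb]

theorem eq_or_eq_or_eq_of_adj (hv : G.degree v ≤ 3) (ha : G.Adj v a) (hb : G.Adj v b)
    (hc : G.Adj v c) (hab : a ≠ b) (hac : a ≠ c) (hbc : b ≠ c) (hw : G.Adj v w) :
    w = a ∨ w = b ∨ w = c := by
  classical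
  have hsub : {a, b, c} ⊆ G.neighborFinset v := by
    simp [Finset.insert_subset_iff, ha, hb, hc]
  have heq : {a, b, c} = G.neighborFinset v := Finset.eq_of_subset_of_card_le hsub <| by
    rwa [card_neighborFinset_eq_degree, Finset.card_eq_three.2 ⟨a, b, c, hab, hac, hbc, rfl⟩]
  have hmem : w ∈ G.neighborFinset v := (G.mem_neighborFinset v w).2 hw
  simpa only [← heq, Finset.mem_insert, Finset.mem_singleton] using hmem

theorem exists_adj_ne_ne (hv : 2 < G.degree v) (a b : V) : ∃ w, G.Adj v w ∧ w ≠ a ∧ w ≠ b := by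
  classical
  have hlt : ({a, b} : Finset V).card < (G.neighborFinset v).card :=
    Finset.card_le_two.trans_lt (by rwa [card_neighborFinset_eq_degree])
  obtain ⟨w, hvw, hw⟩ := Finset.exists_mem_notMem_of_card_lt_card hlt
  rw [mem_neighborFinset] at hvw
  simp only [Finset.mem_insert, Finset.mem_singleton, not_or] at hw
  exact ⟨w, hvw, hw⟩

theorem encard_neighborSet_eq_degree : (G.neighborSet v).encard = G.degree v := by
  rw [← coe_neighborFinset, Set.encard_coe_eq_coe_finsetCard, card_neighborFinset_eq_degree]

theorem degree_eq_of_neighborSet_eq {u : V} [Fintype (G.neighborSet u)]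
    (h : G.neighborSet u = G.neighborSet v) : G.degree u = G.degree v := by
  simpa only [encard_neighborSet_eq_degree, Nat.cast_inj] using congrArg Set.encard h

end Degree

theorem triangle_or_square_of_isCycle {V : Type*} {G : SimpleGraph V} {v : V} {p : G.Walk v v}
    (hp : p.IsCycle) (hlen : p.length ≤ 4) :
    (∃ a b, G.Adj v a ∧ G.Adj a b ∧ G.Adj v b) ∨
      ∃ a b c, G.Adj v a ∧ G.Adj a b ∧ G.Adj b c ∧ G.Adj v c ∧ a ≠ c ∧ v ≠ b := by
  have hthree := hp.three_le_length
  have hnodup := hp.support_nodup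
  match p with
  | .nil => simp at hthree
  | .cons _ .nil => simp at hthree
  | .cons _ (.cons _ .nil) => simp at hthree
  | .cons hva (.cons hab (.cons hbv .nil)) => exact .inl ⟨_, _, hva, hab, hbv.symm⟩
  | .cons hva (.cons hab (.cons hbc (.cons hcv .nil))) =>
    simp only [Walk.support_cons, Walk.support_nil, List.tail_cons, List.nodup_cons,
      List.mem_cons, not_or] at hnodup
    exact .inr ⟨_, _, _, hva, hab, hbc, hcv.symm, hnodup.1.2.1, Ne.symm hnodup.2.1.2.1⟩
  | .cons _ (.cons _ (.cons _ (.cons _ (.cons _ _)))) =>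
    simp only [Walk.length_cons] at hlen
    lia

/-- A chosen representative of the class of vertices with the same neighborhood as `a`. -/
noncomputable def twinRep {V : Type*} (G : SimpleGraph V) (a : V) : V :=
  (Quotient.mk (Setoid.ker G.neighborSet) a).out

theorem neighborSet_twinRep {V : Type*} {G : SimpleGraph V} (a : V) :
    G.neighborSet (twinRep G a) = G.neighborSet a :=
  Setoid.ker_apply_mk_out a

theorem twinRep_eq_of_neighborSet_eq {V : Type*} {G : SimpleGraph V} {a b : V}
    (h : G.neighborSet a = G.neighborSet b) : twinRep G a = twinRep G b :=
  congrArg Quotient.out (Quotient.sound (s := Setoid.ker G.neighborSet) h)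

section LocalStructure

variable {V : Type*} [Fintype V] {G : SimpleGraph V} [DecidableRel G.Adj]
  {a b c p q v w x x' y y' z : V}

theorem Subcubic.degree_le_two_of_ne (hsub : Subcubic G) (hv : G.degree v ≠ 3) :
    G.degree v ≤ 2 :=
  Nat.le_of_lt_succ ((hsub v).lt_of_ne hv)

theorem Saturated.eq_of_adj (hsat : Saturated G 1) (hv : G.degree v = 3) (hva : G.Adj v a)
    (hvb : G.Adj v b) (ha : G.degree a = 3) (hb : G.degree b = 3) : a = b :=
  Finset.card_le_one.1 (hsat v hv) a (by simp [hva, ha]) b (by simp [hvb, hb])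

theorem encard_neighborSet_induce_le_two (hsub : Subcubic G) {B : Set V}
    (hB : ∀ v, G.degree v = 3 → ∃ r ∉ B, G.Adj v r) (v : B) :
    ((G.induce B).neighborSet v).encard ≤ 2 := by
  obtain ⟨N, hBN, hN⟩ : ∃ N : Set V, G.neighborSet v ∩ B ⊆ N ∧ N.encard ≤ 2 := by
    by_cases hv : G.degree (v : V) = 3
    · obtain ⟨r, hr, hvr⟩ := hB v hv
      refine ⟨G.neighborSet v \ {r}, fun u hu => ⟨hu.1, fun h => hr (h ▸ hu.2)⟩, ?_⟩
      rw [Set.encard_sdiff_singleton_of_mem (show r ∈ G.neighborSet v from hvr),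
        encard_neighborSet_eq_degree, hv]
      norm_num
    · refine ⟨G.neighborSet v, Set.inter_subset_left, ?_⟩
      rw [encard_neighborSet_eq_degree]
      exact_mod_cast hsub.degree_le_two_of_ne hv
  exact (Set.encard_le_encard_of_injOn (t := N) (fun (u : B) hu => hBN ⟨hu, u.2⟩)
    Subtype.val_injective.injOn).trans hN

/-- A vertex of degree at most two, adjacent to a 3-vertex, that shares its neighborhood with
another vertex. -/
structure IsTwin (G : SimpleGraph V) [DecidableRel G.Adj] (a : V) : Prop where
  degree_le : G.degree a ≤ 2
  exists_adj : ∃ x, G.Adj a x ∧ G.degree x = 3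
  exists_twin : ∃ c ≠ a, G.neighborSet c = G.neighborSet a

theorem IsTwin.of_neighborSet_eq (ha : IsTwin G a) (h : G.neighborSet b = G.neighborSet a) :
    IsTwin G b := by
  obtain ⟨hdeg, ⟨x, hax, hx⟩, c, hca, hc⟩ := ha
  refine ⟨degree_eq_of_neighborSet_eq h ▸ hdeg, ⟨x, (Set.ext_iff.1 h x).2 hax, hx⟩, ?_⟩
  by_cases hba : b = a
  · exact ⟨c, hba ▸ hca, hc.trans h.symm⟩
  · exact ⟨a, Ne.symm hba, h.symm⟩

-- Otherwise the two twins are all the neighbors of `p`, and neither is a 3-vertex.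
theorem IsTwin.two_lt_degree (ha : IsTwin G a) (hap : G.Adj a p) (hpx : G.Adj p x)
    (hx : G.degree x = 3) : 2 < G.degree p := by
  by_contra! hp
  obtain ⟨hdeg, -, c, hca, hc⟩ := ha
  have hcp : G.Adj c p := (Set.ext_iff.1 hc p).2 hap
  have hdeg' : G.degree c = G.degree a := degree_eq_of_neighborSet_eq hc
  obtain rfl | rfl := eq_or_eq_of_adj hp hap.symm hcp.symm hca.symm hpx <;> lia

/-- The vertex `y` of degree two of a triangle `y x z` whose vertex `x` has degree three. Twins are
excluded because they are treated separately. -/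
structure IsTriangleApex (G : SimpleGraph V) [DecidableRel G.Adj] (y x z : V) : Prop where
  degree_le : G.degree y ≤ 2
  not_isTwin : ¬IsTwin G y
  adj_left : G.Adj y x
  adj_right : G.Adj y z
  adj_base : G.Adj x z
  degree_left : G.degree x = 3

namespace IsTriangleApex

theorem swap (h : IsTriangleApex G y x z) (hz : G.degree z = 3) : IsTriangleApex G y z x :=
  ⟨h.degree_le, h.not_isTwin, h.adj_right, h.adj_left, h.adj_base.symm, hz⟩

theorem neighborSet_eq (h : IsTriangleApex G y x z) : G.neighborSet y = {x, z} :=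
  neighborSet_eq_pair h.degree_le h.adj_left h.adj_right h.adj_base.ne

theorem eq_of_adj_of_adj (h : IsTriangleApex G y x z) (hp : G.degree p ≤ 2) (hpx : G.Adj p x)
    (hpz : G.Adj p z) : p = y := by
  by_contra hpy
  exact h.not_isTwin ⟨h.degree_le, ⟨x, h.adj_left, h.degree_left⟩, p, hpy,
    (neighborSet_eq_pair hp hpx hpz h.adj_base.ne).trans h.neighborSet_eq.symm⟩

end IsTriangleApex

/-- The third neighbor `p` of the vertex `x` of a triangle `y x z` with apex `y` and two 3-vertices
`x` and `z`. -/
structure IsTriangleTail (G : SimpleGraph V) [DecidableRel G.Adj] (y x z p : V) : Prop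
    extends IsTriangleApex G y x z where
  degree_right : G.degree z = 3
  adj_tail : G.Adj x p
  tail_ne_apex : p ≠ y
  tail_ne_right : p ≠ z

namespace IsTriangleTail

theorem eq_or_eq_or_eq_of_adj (h : IsTriangleTail G y x z p) (hw : G.Adj x w) :
    w = y ∨ w = z ∨ w = p :=
  _root_.eq_or_eq_or_eq_of_adj h.degree_left.le h.adj_left.symm h.adj_base h.adj_tail
    h.adj_right.ne h.tail_ne_apex.symm h.tail_ne_right.symm hw

theorem degree_tail_ne_three (hsat : Saturated G 1) (h : IsTriangleTail G y x z p) :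
    G.degree p ≠ 3 := fun hp =>
  h.tail_ne_right (hsat.eq_of_adj h.degree_left h.adj_tail h.adj_base hp h.degree_right)

theorem not_adj_of_adj (h : IsTriangleTail G y x z p) (hp : G.degree p ≤ 2) (hxw : G.Adj x w) :
    ¬G.Adj p w := by
  intro hpw
  obtain rfl | rfl | rfl := h.eq_or_eq_or_eq_of_adj hxw
  · have hmem : p ∈ G.neighborSet w := hpw.symm
    rw [h.neighborSet_eq] at hmem
    exact hmem.elim h.adj_tail.ne' h.tail_ne_right
  · exact h.tail_ne_apex (h.eq_of_adj_of_adj hp h.adj_tail.symm hpw)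
  · exact hpw.ne rfl

theorem not_isTwin_tail (h : IsTriangleTail G y x z p) : ¬IsTwin G p := by
  rintro ⟨hp, -, c, hcp, hc⟩
  have hcx : G.Adj c x := (Set.ext_iff.1 hc x).2 h.adj_tail.symm
  have hdeg : G.degree c = G.degree p := degree_eq_of_neighborSet_eq hc
  obtain rfl | rfl | rfl := h.eq_or_eq_or_eq_of_adj hcx.symm
  · exact h.not_isTwin ⟨h.degree_le, ⟨x, hcx, h.degree_left⟩, p, hcp.symm, hc.symm⟩
  · have hz := h.degree_right
    lia
  · exact hcp rfl

end IsTriangleTail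

/-- The vertex `y` of a 4-cycle `y x x' y'` in which `x` and `x'` are the 3-vertices and the edge
`x x'` lies in no triangle. -/
structure IsSquareCorner (G : SimpleGraph V) [DecidableRel G.Adj] (y x x' y' : V) : Prop where
  degree_corner : G.degree y ≤ 2
  degree_corner' : G.degree y' ≤ 2
  degree_base : G.degree x = 3
  degree_base' : G.degree x' = 3
  adj_left : G.Adj y x
  adj_base : G.Adj x x'
  adj_right : G.Adj x' y'
  adj_top : G.Adj y y'
  not_adj_of_adj : ∀ w, G.Adj x w → ¬G.Adj x' w

namespace IsSquareCorner

theorem symm (h : IsSquareCorner G y x x' y') : IsSquareCorner G y' x' x y :=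
  ⟨h.degree_corner', h.degree_corner, h.degree_base', h.degree_base, h.adj_right.symm,
    h.adj_base.symm, h.adj_left.symm, h.adj_top.symm, fun w hw' hw => h.not_adj_of_adj w hw hw'⟩

theorem base_ne_corner (h : IsSquareCorner G y x x' y') : x ≠ y' := by
  rintro rfl
  have hle := h.degree_corner'
  have heq := h.degree_base
  lia

theorem neighborSet_eq (h : IsSquareCorner G y x x' y') : G.neighborSet y = {x, y'} :=
  neighborSet_eq_pair h.degree_corner h.adj_left h.adj_top h.base_ne_corner

theorem not_isTwin (h : IsSquareCorner G y x x' y') : ¬IsTwin G y := fun hy =>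
  (hy.two_lt_degree h.adj_top h.adj_right.symm h.degree_base').not_ge h.degree_corner'

end IsSquareCorner

/-- The vertices whose deletion leaves a graph of maximum degree at most two: all twins but one of
every class, the apices of triangles, and the vertices of degree two on squares with two adjacent
3-vertices. -/
inductive IsRemoved (G : SimpleGraph V) [DecidableRel G.Adj] : V → Prop
  | twin {r : V} (h : IsTwin G r) (hr : twinRep G r ≠ r) : IsRemoved G r
  | apex {y x z : V} (h : IsTriangleApex G y x z) : IsRemoved G y
  | square {y x x' y' : V} (h : IsSquareCorner G y x x' y') : IsRemoved G y

theorem IsRemoved.degree_le_two (h : IsRemoved G v) : G.degree v ≤ 2 := by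
  cases h with
  | twin h _ => exact h.degree_le
  | apex h => exact h.degree_le
  | square h => exact h.degree_corner

theorem IsTwin.not_isRemoved (ha : IsTwin G a) (hrep : twinRep G a = a) : ¬IsRemoved G a := by
  rintro (⟨-, hr⟩ | h | h)
  exacts [hr hrep, h.not_isTwin ha, h.not_isTwin ha]

theorem IsTwin.not_isRemoved_twinRep (ha : IsTwin G a) : ¬IsRemoved G (twinRep G a) :=
  (ha.of_neighborSet_eq (neighborSet_twinRep a)).not_isRemoved
    (twinRep_eq_of_neighborSet_eq (neighborSet_twinRep a))

theorem IsTriangleTail.not_isRemoved_tail (hsat : Saturated G 1) (h : IsTriangleTail G y x z p) :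
    ¬IsRemoved G p := by
  intro hp
  have hpx : x ∈ G.neighborSet p := h.adj_tail.symm
  cases hp with
  | twin hp _ => exact h.not_isTwin_tail hp
  | apex hp =>
    rw [hp.neighborSet_eq] at hpx
    obtain rfl | rfl := hpx
    exacts [h.not_adj_of_adj hp.degree_le hp.adj_base hp.adj_right,
      h.not_adj_of_adj hp.degree_le hp.adj_base.symm hp.adj_left]
  | square hp =>
    rw [hp.neighborSet_eq] at hpx
    obtain rfl | rfl := hpx
    · obtain rfl := hsat.eq_of_adj h.degree_left hp.adj_base h.adj_base hp.degree_base'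
        h.degree_right
      exact hp.not_adj_of_adj y h.adj_left.symm h.adj_right.symm
    · have hle := hp.degree_corner'
      have heq := h.degree_left
      lia

theorem exists_isRemoved_adj_of_isTwin (ha : IsTwin G a) (hva : G.Adj v a) :
    ∃ r, IsRemoved G r ∧ G.Adj v r := by
  by_cases hrep : twinRep G a = a
  · obtain ⟨c, hca, hc⟩ := ha.exists_twin
    refine ⟨c, .twin (ha.of_neighborSet_eq hc) ?_, ((Set.ext_iff.1 hc v).2 hva.symm).symm⟩
    rw [twinRep_eq_of_neighborSet_eq hc, hrep]
    exact hca.symm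
  · exact ⟨a, .twin ha hrep, hva⟩

theorem exists_isRemoved_adj_of_triangle (hsub : Subcubic G) (hsat : Saturated G 1)
    (hv : G.degree v = 3) (hva : G.Adj v a) (hab : G.Adj a b) (hvb : G.Adj v b) :
    ∃ r, IsRemoved G r ∧ G.Adj v r := by
  wlog hb : G.degree b ≤ 2 generalizing a b
  · refine this hvb hab.symm hva (hsub.degree_le_two_of_ne fun ha => hb ?_)
    refine hsub.degree_le_two_of_ne fun hb => hab.ne ?_
    exact hsat.eq_of_adj hv hva hvb ha hb
  by_cases htwin : IsTwin G b
  · exact exists_isRemoved_adj_of_isTwin htwin hvb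
  · exact ⟨b, .apex ⟨hb, htwin, hvb.symm, hab.symm, hva, hv⟩, hvb⟩

theorem exists_isRemoved_adj_of_square (hsub : Subcubic G) (hsat : Saturated G 1)
    (hv : G.degree v = 3) (hva : G.Adj v a) (hab : G.Adj a b) (hbc : G.Adj b c)
    (hvc : G.Adj v c) (hne_ac : a ≠ c) (hne_vb : v ≠ b) : ∃ r, IsRemoved G r ∧ G.Adj v r := by
  by_cases hsmall : G.degree a ≤ 2 ∧ G.degree c ≤ 2
  · refine exists_isRemoved_adj_of_isTwin ⟨hsmall.1, ⟨v, hva.symm, hv⟩, c, hne_ac.symm, ?_⟩ hva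
    rw [neighborSet_eq_pair hsmall.1 hva.symm hab hne_vb,
      neighborSet_eq_pair hsmall.2 hvc.symm hbc.symm hne_vb]
  wlog ha : G.degree a = 3 generalizing a c
  · exact this hvc hbc.symm hab.symm hva hne_ac.symm (fun h => hsmall h.symm) <| by
      by_contra hc
      exact hsmall ⟨hsub.degree_le_two_of_ne ha, hsub.degree_le_two_of_ne hc⟩
  have hb : G.degree b ≤ 2 := hsub.degree_le_two_of_ne fun hb =>
    hne_vb (hsat.eq_of_adj ha hva.symm hab hv hb)
  have hc : G.degree c ≤ 2 := hsub.degree_le_two_of_ne fun hc =>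
    hne_ac (hsat.eq_of_adj hv hva hvc ha hc)
  by_cases hcommon : ∃ u, G.Adj v u ∧ G.Adj a u
  · obtain ⟨u, hvu, hau⟩ := hcommon
    exact exists_isRemoved_adj_of_triangle hsub hsat hv hva hau hvu
  · push Not at hcommon
    exact ⟨c, .square ⟨hc, hb, hv, ha, hvc.symm, hva, hab, hbc.symm, hcommon⟩, hvc⟩

theorem exists_isRemoved_adj (hsub : Subcubic G) (hsat : Saturated G 1) (hv : G.degree v = 3)
    (hcycle : ∃ p : G.Walk v v, p.IsCycle ∧ p.length ≤ 4) : ∃ r, IsRemoved G r ∧ G.Adj v r := by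
  obtain ⟨p, hp, hlen⟩ := hcycle
  obtain ⟨a, b, hva, hab, hvb⟩ | ⟨a, b, c, hva, hab, hbc, hvc, hne_ac, hne_vb⟩ :=
    triangle_or_square_of_isCycle hp hlen
  · exact exists_isRemoved_adj_of_triangle hsub hsat hv hva hab hvb
  · exact exists_isRemoved_adj_of_square hsub hsat hv hva hab hbc hvc hne_ac hne_vb

theorem adj_or_exists_not_isRemoved_mem_commonNeighbors (hv : ¬IsRemoved G v)
    (hw : ¬IsRemoved G w) (hvw : v ≠ w) (hne : (G.commonNeighbors v w).Nonempty) :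
    G.Adj v w ∨ ∃ n ∈ G.commonNeighbors v w, ¬IsRemoved G n := by
  obtain ⟨n, hvn, hwn⟩ := hne
  by_cases hn : IsRemoved G n
  swap
  · exact .inr ⟨n, ⟨hvn, hwn⟩, hn⟩
  have hnv : v ∈ G.neighborSet n := hvn.symm
  have hnw : w ∈ G.neighborSet n := hwn.symm
  cases hn with
  | twin hn _ =>
    rw [← neighborSet_twinRep] at hnv hnw
    exact .inr ⟨twinRep G n, ⟨Adj.symm hnv, Adj.symm hnw⟩, hn.not_isRemoved_twinRep⟩
  | apex hn =>
    rw [hn.neighborSet_eq] at hnv hnw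
    obtain rfl | rfl := hnv <;> obtain rfl | rfl := hnw
    exacts [absurd rfl hvw, .inl hn.adj_base, .inl hn.adj_base.symm, absurd rfl hvw]
  | square hn =>
    rw [hn.neighborSet_eq] at hnv hnw
    obtain rfl | rfl := hnv
    · obtain rfl | rfl := hnw
      exacts [absurd rfl hvw, absurd (.square hn.symm) hw]
    · exact absurd (.square hn.symm) hv

theorem IsTriangleApex.exists_isTriangleTail (h : IsTriangleApex G y x z) (hz : G.degree z = 3) :
    ∃ p, IsTriangleTail G y x z p := by
  obtain ⟨p, hxp, hpy, hpz⟩ := exists_adj_ne_ne h.degree_left.ge y z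
  exact ⟨p, h, hz, hxp, hpy, hpz⟩

namespace IsTriangleTail

theorem tail_unique (hsat : Saturated G 1) (h : IsTriangleTail G y x z p)
    (h' : IsTriangleTail G y x b q) : q = p := by
  obtain rfl | rfl | rfl := h.eq_or_eq_or_eq_of_adj h'.adj_tail
  exacts [absurd rfl h'.tail_ne_apex, absurd h.degree_right (h'.degree_tail_ne_three hsat), rfl]

theorem apex_unique (hsat : Saturated G 1) (h : IsTriangleTail G y x z p)
    (h' : IsTriangleTail G y' x b q) : y' = y := by
  obtain rfl := hsat.eq_of_adj h.degree_left h.adj_base h'.adj_base h.degree_right h'.degree_right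
  exact h.eq_of_adj_of_adj h'.degree_le h'.adj_left h'.adj_right

theorem pair_unique_of_adj (hsub : Subcubic G) (hsat : Saturated G 1)
    {y₁ x₁ z₁ p₁ y₂ x₂ z₂ p₂ : V} (h : IsTriangleTail G y x z p)
    (h₁ : IsTriangleTail G y₁ x₁ z₁ p₁) (h₂ : IsTriangleTail G y₂ x₂ z₂ p₂)
    (hp₁ : G.Adj p p₁) (hp₂ : G.Adj p p₂) : x₁ = x₂ ∧ p₁ = p₂ := by
  have tail_ne {y x z p y' x' z' p' : V} (h : IsTriangleTail G y x z p)
      (h' : IsTriangleTail G y' x' z' p') : x' ≠ p := by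
    rintro rfl
    exact h.degree_tail_ne_three hsat h'.degree_left
  have degree_tail {y x z p : V} (h : IsTriangleTail G y x z p) : G.degree p ≤ 2 :=
    hsub.degree_le_two_of_ne (h.degree_tail_ne_three hsat)
  have hp : p₁ = p₂ := by
    by_contra hne
    exact (eq_or_eq_of_adj (degree_tail h) hp₁ hp₂ hne h.adj_tail.symm).elim
      (tail_ne h₁ h) (tail_ne h₂ h)
  subst hp
  refine ⟨?_, rfl⟩
  by_contra hne
  exact (eq_or_eq_of_adj (degree_tail h₁) h₁.adj_tail.symm h₂.adj_tail.symm hne hp₁.symm).elim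
    (tail_ne h h₁).symm (tail_ne h h₂).symm

end IsTriangleTail

theorem exists_isIndepSet_triangleTails (hsub : Subcubic G) (hsat : Saturated G 1) :
    ∃ P : Set V, G.IsIndepSet P ∧ (∀ p ∈ P, ∃ y x z, IsTriangleTail G y x z p) ∧
      ∀ y x z p q, IsTriangleTail G y x z p → IsTriangleTail G y z x q → p ∈ P ∨ q ∈ P := by
  classical
  let K : SimpleGraph {e : V × V // ∃ y z, IsTriangleTail G y e.1 z e.2} :=
    G.comap fun e => e.1.2
  have hK e : (K.neighborSet e).Subsingleton := by
    obtain ⟨e, y, z, h⟩ := e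
    rintro ⟨e₁, y₁, z₁, h₁⟩ he₁ ⟨e₂, y₂, z₂, h₂⟩ he₂
    exact Subtype.ext (Prod.ext_iff.2 (h.pair_unique_of_adj hsub hsat h₁ h₂ he₁ he₂))
  let tails (y : {y // ∃ x z, IsTriangleApex G y x z ∧ G.degree z = 3}) :=
    Finset.univ.filter fun e : {e : V × V // ∃ y z, IsTriangleTail G y e.1 z e.2} =>
      ∃ z, IsTriangleTail G y e.1.1 z e.1.2
  have hdisj : Pairwise (Function.onFun Disjoint tails) := fun y y' hne =>
    Finset.disjoint_filter.2 fun e _ ⟨_, h⟩ ⟨_, h'⟩ => hne (Subtype.ext (h'.apex_unique hsat h))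
  have hcard y : 2 ≤ (tails y).card := by
    obtain ⟨y, x, z, h, hz⟩ := y
    obtain ⟨p, hp⟩ := h.exists_isTriangleTail hz
    obtain ⟨q, hq⟩ := (h.swap hz).exists_isTriangleTail h.degree_left
    refine Finset.one_lt_card.2 ⟨⟨(x, p), y, z, hp⟩, ?_, ⟨(z, q), y, x, hq⟩, ?_, ?_⟩
    · exact Finset.mem_filter.2 ⟨Finset.mem_univ _, z, hp⟩
    · exact Finset.mem_filter.2 ⟨Finset.mem_univ _, x, hq⟩
    · exact fun heq => h.adj_base.ne (congrArg (fun e => e.1.1) heq)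
  obtain ⟨f, hf, hindep⟩ := exists_independent_transversal hK tails hdisj hcard
  refine ⟨Set.range fun y => (f y).1.2, ?_, ?_, fun y x z p q hp hq => ?_⟩
  · rintro _ ⟨i, rfl⟩ _ ⟨j, rfl⟩ -
    exact hindep i j
  · rintro _ ⟨i, rfl⟩
    obtain ⟨y, z, h⟩ := (f i).2
    exact ⟨y, _, z, h⟩
  · let i : {y // ∃ x z, IsTriangleApex G y x z ∧ G.degree z = 3} :=
      ⟨y, x, z, hp.toIsTriangleApex, hp.degree_right⟩
    obtain ⟨w, hw⟩ := (Finset.mem_filter.1 (hf i)).2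
    have hmem : (f i).1.1 ∈ G.neighborSet y := hw.adj_left
    rw [hp.neighborSet_eq] at hmem
    obtain hx | hz := hmem
    · exact .inl ⟨i, hp.tail_unique hsat (hx ▸ hw)⟩
    · exact .inr ⟨i, hq.tail_unique hsat (Set.mem_singleton_iff.1 hz ▸ hw)⟩

theorem isIndepSet_setOf_isTwin_union (hsub : Subcubic G) (hsat : Saturated G 1) {P : Set V}
    (hP : G.IsIndepSet P) (hPtail : ∀ p ∈ P, ∃ y x z, IsTriangleTail G y x z p) :
    G.IsIndepSet ({a | IsTwin G a} ∪ P) := by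
  have not_adj_twin {u v} (hu : IsTwin G u) (hv : IsTwin G v) : ¬G.Adj u v := fun huv => by
    obtain ⟨x, hvx, hx⟩ := hv.exists_adj
    exact (hu.two_lt_degree huv hvx hx).not_ge hv.degree_le
  have not_adj_tail {u p} (hu : IsTwin G u) (hp : p ∈ P) : ¬G.Adj u p := fun hup => by
    obtain ⟨y, x, z, h⟩ := hPtail p hp
    exact (hu.two_lt_degree hup h.adj_tail.symm h.degree_left).not_ge
      (hsub.degree_le_two_of_ne (h.degree_tail_ne_three hsat))
  rintro u (hu | hu) v (hv | hv) huv
  exacts [not_adj_twin hu hv, not_adj_tail hu hv, fun h => not_adj_tail hv hu h.symm, hP hu hv huv]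

/-- The requirements on the first color class `I`. It is a maximal independent set of `G` that is
also maximal among the kept vertices, contains all chosen twins, and contains one of the two tails
of every triangle with two 3-vertices. They bound the conflicts outside `I` so that three more
colors suffice. -/
structure IsFirstClass (G : SimpleGraph V) [DecidableRel G.Adj] (I : Set V) : Prop where
  isIndepSet : G.IsIndepSet I
  dominates : ∀ v ∉ I, ∃ w ∈ I, G.Adj v w
  dominates_kept : ∀ v ∉ I, ¬IsRemoved G v → ∃ w ∈ I, ¬IsRemoved G w ∧ G.Adj v w
  twinRep_mem : ∀ a, IsTwin G a → twinRep G a ∈ I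
  tail_mem : ∀ y x z p q, IsTriangleTail G y x z p → IsTriangleTail G y z x q → p ∈ I ∨ q ∈ I

theorem exists_isFirstClass (hsub : Subcubic G) (hsat : Saturated G 1) :
    ∃ I, IsFirstClass G I := by
  obtain ⟨P, hP, hPtail, hPmem⟩ := exists_isIndepSet_triangleTails hsub hsat
  let S := {a | IsTwin G a ∧ twinRep G a = a} ∪ P
  have hS : G.IsIndepSet S := (isIndepSet_setOf_isTwin_union hsub hsat hP hPtail).mono
    (Set.union_subset_union_left P fun _ ha => ha.1)
  have hkept : S ⊆ {v | ¬IsRemoved G v} := by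
    rintro v (hv | hv)
    · exact hv.1.not_isRemoved hv.2
    · obtain ⟨y, x, z, h⟩ := hPtail v hv
      exact h.not_isRemoved_tail hsat
  obtain ⟨J, hSJ, hJ, hJindep, hJdom⟩ := exists_isIndepSet_superset_dominating hS hkept
  obtain ⟨I, hJI, -, hI, hdom⟩ :=
    exists_isIndepSet_superset_dominating hJindep (Set.subset_univ J)
  have mem_I {v} (hv : v ∈ S) : v ∈ I := hJI (hSJ hv)
  refine ⟨I, hI, fun v => hdom v trivial, fun v hvI hv => ?_, fun a ha => mem_I (.inl ?_),
    fun y x z p q hp hq => ?_⟩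
  · obtain ⟨w, hwJ, hvw⟩ := hJdom v hv fun hvJ => hvI (hJI hvJ)
    exact ⟨w, hJI hwJ, hJ hwJ, hvw⟩
  · exact ⟨ha.of_neighborSet_eq (neighborSet_twinRep a),
      twinRep_eq_of_neighborSet_eq (neighborSet_twinRep a)⟩
  · exact (hPmem y x z p q hp hq).imp (fun h => mem_I (.inr h)) fun h => mem_I (.inr h)

namespace IsFirstClass

variable {I : Set V}

theorem notMem_of_adj (hI : IsFirstClass G I) (ha : a ∈ I) (hab : G.Adj a b) : b ∉ I := fun hb =>
  hI.isIndepSet ha hb hab.ne hab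

theorem mem_or_mem_of_neighborSet_eq_pair (hI : IsFirstClass G I)
    (hN : G.neighborSet v = {a, b}) (hv : v ∉ I) : a ∈ I ∨ b ∈ I := by
  obtain ⟨w, hwI, hw⟩ := hI.dominates v hv
  rw [← mem_neighborSet, hN] at hw
  obtain rfl | rfl := hw
  exacts [.inl hwI, .inr hwI]

theorem mem_of_isTwin (hI : IsFirstClass G I) (ha : IsTwin G a) : a ∈ I := by
  by_contra hna
  obtain ⟨w, hwI, haw⟩ := hI.dominates a hna
  rw [← mem_neighborSet, ← neighborSet_twinRep] at haw
  exact hI.notMem_of_adj (hI.twinRep_mem a ha) haw hwI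

theorem exists_forall_eq_of_isTriangleApex (hI : IsFirstClass G I) (hsub : Subcubic G)
    (h : IsTriangleApex G y x z) :
    ∃ t, ∀ u ∉ I, u ≠ y → u ≠ x → u ≠ z → G.Adj x u ∨ G.Adj z u → u = t := by
  by_cases hz : G.degree z = 3
  · obtain ⟨p, hp⟩ := h.exists_isTriangleTail hz
    obtain ⟨q, hq⟩ := (h.swap hz).exists_isTriangleTail h.degree_left
    have eq_or_eq u (huy : u ≠ y) (hux : u ≠ x) (huz : u ≠ z) (hu : G.Adj x u ∨ G.Adj z u) :
        u = p ∨ u = q :=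
      hu.imp (fun hu => ((hp.eq_or_eq_or_eq_of_adj hu).resolve_left huy).resolve_left huz)
        fun hu => ((hq.eq_or_eq_or_eq_of_adj hu).resolve_left huy).resolve_left hux
    obtain ⟨t, ht⟩ := exists_eq_of_eq_or_eq_of_notMem (hI.tail_mem y x z p q hp hq)
    exact ⟨t, fun u huI huy hux huz hu => ht u huI (eq_or_eq u huy hux huz hu)⟩
  · obtain ⟨p, hxp, hpy, hpz⟩ := exists_adj_ne_ne h.degree_left.ge y z
    refine ⟨p, fun u _ huy hux huz hu => ?_⟩
    obtain hu | hu := hu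
    · exact ((eq_or_eq_or_eq_of_adj h.degree_left.le h.adj_left.symm h.adj_base hxp h.adj_right.ne
        hpy.symm hpz.symm hu).resolve_left huy).resolve_left huz
    · exact absurd (eq_or_eq_of_adj (hsub.degree_le_two_of_ne hz) h.adj_right.symm h.adj_base.symm
        h.adj_left.ne hu) (not_or.2 ⟨huy, hux⟩)

theorem encard_conflicts_le_two_of_isTriangleApex (hI : IsFirstClass G I) (hsub : Subcubic G)
    (h : IsTriangleApex G y x z) (hy : y ∉ I) :
    ((conflictGraph G I).neighborSet y).encard ≤ 2 := by
  obtain ⟨t, ht⟩ := hI.exists_forall_eq_of_isTriangleApex hsub h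
  obtain ⟨b, hb⟩ := exists_eq_of_eq_or_eq_of_notMem
    (hI.mem_or_mem_of_neighborSet_eq_pair h.neighborSet_eq hy)
  refine encard_le_two_of_subset_pair (a := b) (b := t) fun u hu => ?_
  have hnear := eq_or_adj_of_conflictGraph_adj h.neighborSet_eq hu
  obtain ⟨hyu, -, huI, -⟩ := hu
  by_cases hxz : u = x ∨ u = z
  · exact .inl (hb u huI hxz)
  · obtain ⟨hux, huz⟩ := not_or.1 hxz
    exact .inr (ht u huI hyu.symm hux huz (hnear.imp (·.resolve_left hux) (·.resolve_left huz)))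

theorem mem_of_isSquareCorner (hI : IsFirstClass G I) (h : IsSquareCorner G y x x' y')
    (hy : y ∉ I) : y' ∈ I := by
  by_contra hy'
  have hx : x ∈ I := (hI.mem_or_mem_of_neighborSet_eq_pair h.neighborSet_eq hy).resolve_right hy'
  have hx' : x' ∈ I :=
    (hI.mem_or_mem_of_neighborSet_eq_pair h.symm.neighborSet_eq hy').resolve_right hy
  exact hI.notMem_of_adj hx h.adj_base hx'

theorem encard_conflicts_le_two_of_isSquareCorner (hI : IsFirstClass G I)
    (h : IsSquareCorner G y x x' y') (hy : y ∉ I) :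
    ((conflictGraph G I).neighborSet y).encard ≤ 2 := by
  obtain ⟨p, hxp, hpy, hpx'⟩ := exists_adj_ne_ne h.degree_base.ge y x'
  have eq_of_adj {u} (hu : G.Adj x u) : u = y ∨ u = x' ∨ u = p :=
    eq_or_eq_or_eq_of_adj h.degree_base.le h.adj_left.symm h.adj_base hxp
      h.symm.base_ne_corner.symm hpy.symm hpx'.symm hu
  have hy' : y' ∈ I := hI.mem_of_isSquareCorner h hy
  have hxp_mem : x ∈ I ∨ p ∈ I := by
    refine or_iff_not_imp_left.2 fun hx => ?_
    have hx_kept : ¬IsRemoved G x := fun hr => by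
      have hle := hr.degree_le_two
      have heq := h.degree_base
      lia
    obtain ⟨w, hwI, -, hxw⟩ := hI.dominates_kept x hx hx_kept
    obtain rfl | rfl | rfl := eq_of_adj hxw
    exacts [absurd hwI hy, absurd hwI (hI.notMem_of_adj hy' h.adj_right.symm), hwI]
  obtain ⟨b, hb⟩ := exists_eq_of_eq_or_eq_of_notMem hxp_mem
  refine encard_le_two_of_subset_pair (a := b) (b := x') fun u hu => ?_
  have hnear := eq_or_adj_of_conflictGraph_adj h.neighborSet_eq hu
  obtain ⟨hyu, -, huI, -⟩ := hu
  obtain (hux | hxu) | (huy' | hy'u) := hnear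
  · exact .inl (hb u huI (.inl hux))
  · obtain huy | hux' | hup := eq_of_adj hxu
    exacts [absurd huy hyu.symm, .inr hux', .inl (hb u huI (.inr hup))]
  · exact absurd hy' (huy' ▸ huI)
  · rw [← mem_neighborSet, h.symm.neighborSet_eq] at hy'u
    exact .inr (hy'u.resolve_right hyu.symm)

theorem encard_conflicts_le_two_of_isRemoved (hI : IsFirstClass G I) (hsub : Subcubic G)
    (hv : IsRemoved G v) : ((conflictGraph G I).neighborSet v).encard ≤ 2 := by
  by_cases hvI : v ∈ I
  · have hempty : (conflictGraph G I).neighborSet v = ∅ :=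
      Set.eq_empty_iff_forall_notMem.2 fun u hu => hu.2.1 hvI
    simp only [hempty, Set.encard_empty, zero_le]
  · cases hv with
    | twin h _ => exact absurd (hI.mem_of_isTwin h) hvI
    | apex h => exact hI.encard_conflicts_le_two_of_isTriangleApex hsub h hvI
    | square h => exact hI.encard_conflicts_le_two_of_isSquareCorner h hvI

theorem colorable_induce_conflictGraph (hI : IsFirstClass G I) (hsub : Subcubic G)
    (hremoved : ∀ v, G.degree v = 3 → ∃ r, IsRemoved G r ∧ G.Adj v r) :
    ((conflictGraph G I).induce {v | ¬IsRemoved G v}).Colorable 3 := by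
  let B : Set V := {v | ¬IsRemoved G v}
  have hdeg (v : B) : ((G.induce B).neighborSet v).encard ≤ 2 :=
    encard_neighborSet_induce_le_two hsub
      (fun v hv => (hremoved v hv).imp fun r hr => ⟨not_not_intro hr.1, hr.2⟩) v
  have hdom (v : B) (hv : v ∉ ((↑) ⁻¹' I : Set B)) : ∃ w ∈ ((↑) ⁻¹' I : Set B),
      (G.induce B).Adj v w := by
    obtain ⟨w, hwI, hw, hvw⟩ := hI.dominates_kept v hv v.2
    exact ⟨⟨w, hw⟩, hwI, hvw⟩
  have hcol : (conflictGraph (G.induce B) ((↑) ⁻¹' I)).Colorable 3 :=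
    colorable_of_encard_neighborSet_lt fun v =>
      (encard_neighborSet_conflictGraph_le_two hdeg hdom v).trans_lt (by norm_num)
  exact hcol.mono_left <| induce_conflictGraph_le fun u hu v hv =>
    adj_or_exists_not_isRemoved_mem_commonNeighbors hu hv

theorem colorable_conflictGraph (hI : IsFirstClass G I) (hsub : Subcubic G)
    (hremoved : ∀ v, G.degree v = 3 → ∃ r, IsRemoved G r ∧ G.Adj v r) :
    (conflictGraph G I).Colorable 3 := by
  refine colorable_of_colorable_induce (hI.colorable_induce_conflictGraph hsub hremoved) ?_
  intro v hv
  exact (hI.encard_conflicts_le_two_of_isRemoved hsub (not_not.1 hv)).trans_lt (by norm_num)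

end IsFirstClass

end LocalStructure

/-- Every 1-saturated subcubic graph in which every 3-vertex lies on a cycle of
length at most 4 admits a (1,2,2,2)-packing coloring. -/
theorem stmt_13 {V : Type*} [Fintype V] (G : SimpleGraph V) [DecidableRel G.Adj]
    (hsub : Subcubic G) (hsat : Saturated G 1)
    (hgirth : ∀ v : V, G.degree v = 3 →
      ∃ w : G.Walk v v, w.IsCycle ∧ w.length ≤ 4) :
    ∃ c : V → Fin 4, IsPackingColoring G ![1, 2, 2, 2] c := by
  obtain ⟨I, hI⟩ := exists_isFirstClass hsub hsat
  have hcol : (conflictGraph G I).Colorable 3 := hI.colorable_conflictGraph hsub fun v hv =>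
    exists_isRemoved_adj hsub hsat hv (hgirth v hv)
  have hsizes : (Fin.cons 1 fun _ => 2 : Fin 4 → ℕ) = ![1, 2, 2, 2] := by decide
  rw [← hsizes]
  exact exists_isPackingColoring_of_colorable_conflictGraph hI.isIndepSet hcol
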